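/- arXiv:1011.3696 — 4 statements merged into one kernel-verified Lean document; each statement's English description precedes it below -/
import Mathlib

section
/- Let σ ⊆ ℝ^d be a convex cone with nonempty interior and let e_1,…,e_n and f_1,…,f_n be two families of vectors in ℝ^d. If for every j ∈ {1,…,n} and every ν ∈ σ the minimum over all j-element subsets S ⊆ {1,…,n} of Σ_{i∈S}⟨ν,e_i⟩ equals the minimum over all j-element subsets S ⊆ {1,…,n} of Σ_{i∈S}⟨ν,f_i⟩, then there is a permutation π of {1,…,n} with f_i = e_{π(i)} for all i. (The support functions — equivalently, the Newton polyhedra — of the ideals of sums of combinations determine the minimal system of generators of the semigroup.) -/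
/-- Support function of the Newton polyhedron of the `j`-th ideal of sums of
combinations. -/
noncomputable def ordC {d n : ℕ} (e : Fin n → Fin d → ℝ) (j : ℕ) (ν : Fin d → ℝ) : ℝ :=
  sInf {x : ℝ | ∃ S : Finset (Fin n), S.card = j ∧ x = ∑ i ∈ S, ∑ k, ν k * e i k}

/-!
At a fixed `ν`, the minimal sum of `j` of the values `⟨ν, e i⟩` is the sum of the `j` smallest of
them, so the differences of consecutive minimal sums list the values in increasing order. Hence the
values `⟨ν, f i⟩` are a permutation of the values `⟨ν, e i⟩`, where the permutation may depend on
`ν`. The vectors `ν` served by a given permutation form a linear subspace, and these finitely many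
subspaces cover a set with nonempty interior, so a single permutation serves every `ν`.
-/

open Topology

theorem castLE_le_of_strictMono {m n : ℕ} (hmn : m ≤ n) {φ : Fin m → Fin n} (hφ : StrictMono φ)
    (k : Fin m) : Fin.castLE hmn k ≤ φ k := by
  have hcard : (Finset.Iio k).card ≤ (Finset.Iio (φ k)).card :=
    Finset.card_le_card_of_injOn φ (fun l hl => by simpa using hφ (by simpa using hl))
      hφ.injective.injOn
  simpa only [Fin.card_Iio, Fin.le_def, Fin.val_castLE] using hcard

theorem funext_of_sum_castLE_eq {M : Type*} [AddCommMonoid M] [IsLeftCancelAdd M] {n : ℕ}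
    {a b : Fin n → M}
    (h : ∀ j (hj : j ≤ n), ∑ k, a (Fin.castLE hj k) = ∑ k, b (Fin.castLE hj k)) : a = b := by
  funext k
  have hsucc := h (k + 1) k.isLt
  rw [Fin.sum_univ_castSucc, Fin.sum_univ_castSucc] at hsucc
  exact add_left_cancel (hsucc.trans (congrArg (· + _) (h k k.isLt.le).symm))

theorem exists_equiv_monotone_comp {ι α : Type*} [Fintype ι] [LinearOrder α] (a : ι → α) :
    ∃ s : Fin (Fintype.card ι) ≃ ι, Monotone (a ∘ s) :=
  let r := (Fintype.equivFin ι).symm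
  ⟨(Tuple.sort (a ∘ r)).trans r, Tuple.monotone_sort (a ∘ r)⟩

/-- The sums of `j` entries, at distinct indices, of the family `a`; the minima of these sets are
the values of the support functions `ordC`. -/
def subsetSums {ι M : Type*} [AddCommMonoid M] (a : ι → M) (j : ℕ) : Set M :=
  {x | ∃ S : Finset ι, S.card = j ∧ x = ∑ i ∈ S, a i}

section SubsetSums

variable {ι M : Type*} [AddCommMonoid M]

theorem sum_castLE_le_sum_of_monotone [PartialOrder M] [IsOrderedAddMonoid M] {j n : ℕ}
    (hj : j ≤ n) {g : Fin n → M} (hg : Monotone g) {S : Finset (Fin n)} (hS : S.card = j) :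
    ∑ k, g (Fin.castLE hj k) ≤ ∑ i ∈ S, g i := by
  calc ∑ k, g (Fin.castLE hj k)
      ≤ ∑ k, g (S.orderEmbOfFin hS k) := Finset.sum_le_sum fun k _ =>
        hg (castLE_le_of_strictMono hj (S.orderEmbOfFin hS).strictMono k)
    _ = ∑ i ∈ Finset.univ.map (S.orderEmbOfFin hS).toEmbedding, g i := by
        simp only [Finset.sum_map, RelEmbedding.coe_toEmbedding]
    _ = ∑ i ∈ S, g i := by rw [Finset.map_orderEmbOfFin_univ]

theorem isLeast_subsetSums_sum_castLE [PartialOrder M] [IsOrderedAddMonoid M] {j n : ℕ}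
    (hj : j ≤ n) {a : ι → M} {s : Fin n ≃ ι} (hs : Monotone (a ∘ s)) :
    IsLeast (subsetSums a j) (∑ k, a (s (Fin.castLE hj k))) := by
  constructor
  · exact ⟨Finset.univ.map ((Fin.castLEEmb hj).trans s.toEmbedding), by simp, by simp⟩
  · rintro _ ⟨S, hS, rfl⟩
    have hmin := sum_castLE_le_sum_of_monotone hj hs (S := S.map s.symm.toEmbedding) (by simpa)
    simpa using hmin

variable [Fintype ι] [ConditionallyCompleteLinearOrder M] [IsOrderedCancelAddMonoid M]

theorem exists_perm_of_sInf_subsetSums_eq {a b : ι → M}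
    (h : ∀ j, 1 ≤ j → j ≤ Fintype.card ι → sInf (subsetSums a j) = sInf (subsetSums b j)) :
    ∃ π : Equiv.Perm ι, ∀ i, b i = a (π i) := by
  obtain ⟨s, hs⟩ := exists_equiv_monotone_comp a
  obtain ⟨t, ht⟩ := exists_equiv_monotone_comp b
  have hsorted : a ∘ s = b ∘ t := funext_of_sum_castLE_eq fun j hj => by
    obtain rfl | hpos := Nat.eq_zero_or_pos j
    · simp only [Finset.univ_eq_empty, Finset.sum_empty]
    · exact (isLeast_subsetSums_sum_castLE hj hs).csInf_eq.symm.trans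
        ((h j hpos hj).trans (isLeast_subsetSums_sum_castLE hj ht).csInf_eq)
  refine ⟨t.symm.trans s, fun i => ?_⟩
  simpa using (congrFun hsorted (t.symm i)).symm

end SubsetSums

section Covering

theorem mem_of_nontrivial_setOf_add_smul_mem {K E : Type*} [DivisionRing K] [AddCommGroup E]
    [Module K E] {W : Submodule K E} {x v : E} (h : {t : K | x + t • v ∈ W}.Nontrivial) :
    v ∈ W := by
  obtain ⟨t, ht, u, hu, htu⟩ := h
  have hdiff : (t - u) • v ∈ W := by
    simpa [sub_smul] using W.sub_mem ht hu
  exact (W.smul_mem_iff (sub_ne_zero.2 htu)).1 hdiff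

variable {K E : Type*} [NontriviallyNormedField K] [AddCommGroup E] [Module K E]
  [TopologicalSpace E] [ContinuousAdd E] [ContinuousSMul K E]

theorem infinite_setOf_add_smul_mem {σ : Set E} {x : E} (hx : x ∈ interior σ) (v : E) :
    {t : K | x + t • v ∈ σ}.Infinite := by
  have hline : Filter.Tendsto (fun t : K => x + t • v) (𝓝 0) (𝓝 x) := by
    have hcont : Continuous fun t : K => x + t • v := by fun_prop
    simpa using hcont.tendsto 0
  exact infinite_of_mem_nhds 0 (hline (mem_interior_iff_mem_nhds.1 hx))

theorem exists_submodule_eq_top_of_subset_iUnion {ι : Type*} [Finite ι] {σ : Set E}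
    (hσ : (interior σ).Nonempty) {W : ι → Submodule K E} (hW : σ ⊆ ⋃ i, (W i : Set E)) :
    ∃ i, W i = ⊤ := by
  obtain ⟨x, hx⟩ := hσ
  refine Subspace.exists_eq_top_of_iUnion_eq_univ (Set.eq_univ_of_forall fun v => ?_)
  have hunion : (⋃ i, {t : K | x + t • v ∈ W i}).Infinite :=
    (infinite_setOf_add_smul_mem hx v).mono fun t ht => by simpa using hW ht
  obtain ⟨i, hi⟩ : ∃ i, {t : K | x + t • v ∈ W i}.Infinite := by
    by_contra! hfin
    exact hunion (Set.finite_iUnion hfin)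
  exact Set.mem_iUnion.2 ⟨i, mem_of_nontrivial_setOf_add_smul_mem hi.nontrivial⟩

end Covering

theorem stmt2_general {ι E : Type*} [Fintype ι] [AddCommGroup E] [Module ℝ E]
    [TopologicalSpace E] [ContinuousAdd E] [ContinuousSMul ℝ E] {σ : Set E}
    (hint : (interior σ).Nonempty) (e f : ι → Module.Dual ℝ E)
    (h : ∀ j, 1 ≤ j → j ≤ Fintype.card ι → ∀ ν ∈ σ,
      sInf (subsetSums (fun i => e i ν) j) = sInf (subsetSums (fun i => f i ν) j)) :
    ∃ π : Equiv.Perm ι, ∀ i, f i = e (π i) := by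
  let W (π : Equiv.Perm ι) : Submodule ℝ E := ⨅ i, LinearMap.eqLocus (f i) (e (π i))
  have hcover : σ ⊆ ⋃ π, (W π : Set E) := fun ν hν => by
    obtain ⟨π, hπ⟩ := exists_perm_of_sInf_subsetSums_eq fun j hj hjn => h j hj hjn ν hν
    exact Set.mem_iUnion.2 ⟨π, (Submodule.mem_iInf _).2 hπ⟩
  obtain ⟨π, hπ⟩ := exists_submodule_eq_top_of_subset_iUnion hint hcover
  exact ⟨π, fun i => LinearMap.eqLocus_eq_top.1 (iInf_eq_top.1 hπ i)⟩

theorem ordC_eq_sInf_subsetSums {d n : ℕ} (e : Fin n → Fin d → ℝ) (j : ℕ) (ν : Fin d → ℝ) :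
    ordC e j ν = sInf (subsetSums (fun i => dotProductEquiv ℝ (Fin d) (e i) ν) j) := by
  simp only [ordC, subsetSums, dotProductEquiv_apply_apply, dotProduct, mul_comm]

theorem stmt2 (d n : ℕ) (hd : 1 ≤ d) (hn : 1 ≤ n)
    (σ : Set (Fin d → ℝ)) (hconv : Convex ℝ σ)
    (hcone : ∀ x ∈ σ, ∀ c : ℝ, 0 ≤ c → c • x ∈ σ)
    (hint : (interior σ).Nonempty)
    (e f : Fin n → Fin d → ℝ)
    (h : ∀ j : ℕ, 1 ≤ j → j ≤ n → ∀ ν ∈ σ, ordC e j ν = ordC f j ν) :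
    ∃ π : Equiv.Perm (Fin n), ∀ i, f i = e (π i) := by
  simpa using stmt2_general hint (fun i => dotProductEquiv ℝ (Fin d) (e i))
    (fun i => dotProductEquiv ℝ (Fin d) (f i)) (by simpa [ordC_eq_sInf_subsetSums] using h)
end

section
/- Let M be a finitely generated free abelian group, let Λ ⊆ M be a submonoid which generates M as a group, and let k be a field of characteristic zero. The map sending a pair (ν, ω) — where ν : M → ℤ is a group homomorphism with ν(u) > 0 for every u ∈ Λ \ {0}, and ω : M → (k[[t]])ˣ is a group homomorphism into the group of units of the formal power series ring k[[t]] — to the monoid homomorphism h : (Λ,+) → (k[[t]], ·) defined by h(u) = t^{ν(u)} ω(u), is a bijection onto the set of monoid homomorphisms h : (Λ,+) → (k[[t]], ·) such that h(u) ≠ 0 for every u ∈ Λ and the t-order of h(u) is strictly positive for every u ∈ Λ \ {0}. -/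
/-!
A nonzero element of a discrete valuation ring is uniquely a unit times a power of a uniformizer
`ϖ`, so a multiplicative map with nonzero values on a monoid `Λ` is the same as an additive map
`Λ → ℕ` together with a multiplicative map from `Λ` to the units. Both targets embed in commutative
groups, and `M` is the group of differences of `Λ`, so each map extends uniquely to `M`. The order
of `f ∈ k⟦X⟧` is its valuation for the uniformizer `X`.
-/

open IsDiscreteValuationRing

section Extension

variable {M : Type*} [AddCommGroup M] {Λ : AddSubmonoid M}

theorem exists_eq_sub_of_closure_eq_top (hΛ : AddSubgroup.closure (Λ : Set M) = ⊤) (m : M) :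
    ∃ a b : Λ, m = a - b := by
  have hm : m ∈ AddSubgroup.closure (Λ : Set M) := hΛ ▸ AddSubgroup.mem_top m
  induction hm using AddSubgroup.closure_induction with
  | mem x hx => exact ⟨⟨x, hx⟩, 0, by simp⟩
  | zero => exact ⟨0, 0, by simp⟩
  | add x y _ _ hx hy =>
    obtain ⟨a, b, rfl⟩ := hx
    obtain ⟨c, d, rfl⟩ := hy
    exact ⟨a + c, b + d, (add_sub_add_comm ..).symm⟩
  | neg x _ hx =>
    obtain ⟨a, b, rfl⟩ := hx
    exact ⟨b, a, neg_sub ..⟩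

theorem isLocalizationMap_subtype_of_closure_eq_top
    (hΛ : AddSubgroup.closure (Λ : Set M) = ⊤) :
    (⊤ : AddSubmonoid Λ).IsLocalizationMap Λ.subtype := by
  refine AddSubmonoid.isLocalizationMap_of_addGroup Λ.subtype_injective fun m => ?_
  obtain ⟨a, b, hab⟩ := exists_eq_sub_of_closure_eq_top hΛ m
  exact ⟨a, b, AddSubmonoid.mem_top b, hab⟩

theorem existsUnique_addMonoidHom_extension (hΛ : AddSubgroup.closure (Λ : Set M) = ⊤)
    {G : Type*} [AddCommGroup G] (g : Λ →+ G) :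
    ∃! f : M →+ G, ∀ u : Λ, f u = g u := by
  let ι : (⊤ : AddSubmonoid Λ).LocalizationMap M :=
    ⟨Λ.subtype, isLocalizationMap_subtype_of_closure_eq_top hΛ⟩
  have hg (y : (⊤ : AddSubmonoid Λ)) : IsAddUnit (g y) := AddGroup.isAddUnit _
  exact ⟨ι.lift hg, ι.lift_eq hg, fun _ hf => (ι.lift_unique hg hf).symm⟩

theorem existsUnique_monoidHom_extension (hΛ : AddSubgroup.closure (Λ : Set M) = ⊤)
    {G : Type*} [CommGroup G] (g : Multiplicative Λ →* G) :
    ∃! f : Multiplicative M →* G,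
      ∀ u : Λ, f (Multiplicative.ofAdd (u : M)) = g (Multiplicative.ofAdd u) :=
  (AddMonoidHom.toMultiplicativeLeft.existsUnique_congr fun _ => Iff.rfl).mp
    (existsUnique_addMonoidHom_extension hΛ (AddMonoidHom.toMultiplicativeLeft.symm g))

end Extension

theorem exists_addMonoidHom_nat_coe_eq_of_nonneg {A : Type*} [AddZeroClass A] (ν : A →+ ℤ)
    (hν : ∀ a, 0 ≤ ν a) : ∃ n : A →+ ℕ, ∀ a, (n a : ℤ) = ν a :=
  ⟨{ toFun := fun a => (ν a).toNat
     map_zero' := by rw [map_zero, Int.toNat_zero]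
     map_add' := fun a b => by rw [map_add, Int.toNat_add (hν a) (hν b)] },
    fun a => Int.toNat_of_nonneg (hν a)⟩

theorem nonneg_of_forall_ne_zero_pos {A B : Type*} [AddZeroClass A] [AddZeroClass B] [Preorder B]
    {Λ : AddSubmonoid A} {ν : A →+ B} (hν : ∀ u : A, u ∈ Λ → u ≠ 0 → 0 < ν u) (u : Λ) :
    0 ≤ ν u := by
  obtain hu | hu := eq_or_ne (u : A) 0
  · rw [hu, map_zero]
  · exact (hν u u.2 hu).le

section DiscreteValuationRing

variable {R : Type*} [CommRing R] [IsDomain R] [IsDiscreteValuationRing R] {ϖ : R}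

theorem unit_mul_irreducible_pow_inj (hϖ : Irreducible ϖ) {u v : Rˣ} {m n : ℕ} :
    u * ϖ ^ m = v * ϖ ^ n ↔ m = n ∧ u = v :=
  ⟨fun h => ⟨unit_mul_pow_congr_pow hϖ hϖ u v m n h, unit_mul_pow_congr_unit hϖ u v m n h⟩,
    by rintro ⟨rfl, rfl⟩; rfl⟩

theorem unit_mul_pow_eq_pow_toNat_mul_unit_iff (hϖ : Irreducible ϖ) {u v : Rˣ} {n : ℕ} {z : ℤ}
    (hz : 0 ≤ z) : u * ϖ ^ n = ϖ ^ z.toNat * v ↔ z = n ∧ v = u := by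
  rw [mul_comm (ϖ ^ _), unit_mul_irreducible_pow_inj hϖ, eq_comm (a := u)]
  exact and_congr_left' (by lia)

theorem exists_addMonoidHom_monoidHom_eq_unit_mul_pow (hϖ : Irreducible ϖ) {A : Type*}
    [AddZeroClass A] (h : Multiplicative A →* R) (hne : ∀ a, h a ≠ 0) :
    ∃ (n : A →+ ℕ) (w : Multiplicative A →* Rˣ),
      ∀ a, h (Multiplicative.ofAdd a) = w (Multiplicative.ofAdd a) * ϖ ^ n a := by
  choose n w hnw using fun a => eq_unit_mul_pow_irreducible (hne a) hϖ
  have h_one : n 1 = 0 ∧ w 1 = 1 := by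
    rw [← unit_mul_irreducible_pow_inj hϖ, ← hnw, map_one, Units.val_one, pow_zero, one_mul]
  have h_mul (a b) : n (a * b) = n a + n b ∧ w (a * b) = w a * w b := by
    rw [← unit_mul_irreducible_pow_inj hϖ, ← hnw, map_mul, hnw a, hnw b, Units.val_mul, pow_add,
      mul_mul_mul_comm]
  exact ⟨⟨⟨fun a => n (Multiplicative.ofAdd a), h_one.1⟩, fun a b => (h_mul _ _).1⟩,
    ⟨⟨w, h_one.2⟩, fun a b => (h_mul a b).2⟩, fun a => hnw _⟩

theorem multiplicative_pos_addVal_iff_exists_unit_mul_pow (hϖ : Irreducible ϖ) {A : Type*}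
    [AddZeroClass A] (h : A → R) :
    ((∀ a b, h (a + b) = h a * h b) ∧ h 0 = 1 ∧ (∀ a, h a ≠ 0) ∧
        ∀ a, a ≠ 0 → 0 < addVal R (h a)) ↔
      ∃ (n : A →+ ℕ) (w : Multiplicative A →* Rˣ), (∀ a, a ≠ 0 → 0 < n a) ∧
        ∀ a, h a = w (Multiplicative.ofAdd a) * ϖ ^ n a := by
  constructor
  · rintro ⟨hadd, hzero, hne, hpos⟩
    obtain ⟨n, w, hnw⟩ := exists_addMonoidHom_monoidHom_eq_unit_mul_pow hϖ
      (⟨⟨fun a => h a.toAdd, hzero⟩, fun a b => hadd a.toAdd b.toAdd⟩ : Multiplicative A →* R)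
      fun a => hne a.toAdd
    refine ⟨n, w, fun a ha => ?_, hnw⟩
    have hval : addVal R (h a) = n a := addVal_def _ _ hϖ _ (hnw a)
    exact_mod_cast hval ▸ hpos a ha
  · rintro ⟨n, w, hpos, hh⟩
    refine ⟨fun a b => ?_, ?_, fun a => ?_, fun a ha => ?_⟩
    · rw [hh, hh a, hh b, ofAdd_add, map_mul, map_add, Units.val_mul, pow_add, mul_mul_mul_comm]
    · rw [hh, ofAdd_zero, map_one, map_zero, Units.val_one, pow_zero, one_mul]
    · rw [hh]
      exact mul_ne_zero (Units.ne_zero _) (pow_ne_zero _ hϖ.ne_zero)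
    · rw [hh, addVal_def' _ hϖ]
      exact_mod_cast hpos a ha

variable {M : Type*} [AddCommGroup M] {Λ : AddSubmonoid M}

theorem existsUnique_extension_eq_pow_toNat_mul_unit (hΛ : AddSubgroup.closure (Λ : Set M) = ⊤)
    (hϖ : Irreducible ϖ) (n : Λ →+ ℕ) (w : Multiplicative Λ →* Rˣ)
    (hn : ∀ u : Λ, u ≠ 0 → 0 < n u) :
    ∃! p : (M →+ ℤ) × (Multiplicative M →* Rˣ),
      (∀ u : M, u ∈ Λ → u ≠ 0 → 0 < p.1 u) ∧
      ∀ u : Λ, (w (Multiplicative.ofAdd u) : R) * ϖ ^ n u =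
        ϖ ^ (p.1 (u : M)).toNat * (p.2 (Multiplicative.ofAdd (u : M)) : R) := by
  obtain ⟨ν, hν, ν_unique⟩ :=
    existsUnique_addMonoidHom_extension hΛ ((Nat.castAddMonoidHom ℤ).comp n)
  obtain ⟨ω, hω, ω_unique⟩ := existsUnique_monoidHom_extension hΛ w
  have hν_pos (u : M) (hu : u ∈ Λ) (hu0 : u ≠ 0) : 0 < ν u := by
    rw [hν ⟨u, hu⟩]
    exact Int.natCast_pos.mpr (hn ⟨u, hu⟩ (Subtype.coe_ne_coe.mp hu0))
  refine ⟨(ν, ω), ⟨hν_pos, fun u => ?_⟩, ?_⟩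
  · exact (unit_mul_pow_eq_pow_toNat_mul_unit_iff hϖ (nonneg_of_forall_ne_zero_pos hν_pos u)).mpr
      ⟨hν u, hω u⟩
  · rintro ⟨ν', ω'⟩ ⟨hν'_pos, heq⟩
    have agree (u : Λ) := (unit_mul_pow_eq_pow_toNat_mul_unit_iff hϖ
      (nonneg_of_forall_ne_zero_pos hν'_pos u)).mp (heq u)
    exact Prod.ext (ν_unique ν' fun u => (agree u).1) (ω_unique ω' fun u => (agree u).2)

theorem stmt3_general (hΛ : AddSubgroup.closure (Λ : Set M) = ⊤) (hϖ : Irreducible ϖ)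
    (h : Λ → R) :
    ((∀ u v : Λ, h (u + v) = h u * h v) ∧ h 0 = 1 ∧ (∀ u : Λ, h u ≠ 0) ∧
        (∀ u : Λ, u ≠ 0 → 0 < addVal R (h u))) ↔
      ∃! p : (M →+ ℤ) × (Multiplicative M →* Rˣ),
        (∀ u : M, u ∈ Λ → u ≠ 0 → 0 < p.1 u) ∧
        ∀ u : Λ, h u = ϖ ^ (p.1 (u : M)).toNat * (p.2 (Multiplicative.ofAdd (u : M)) : R) := by
  rw [multiplicative_pos_addVal_iff_exists_unit_mul_pow hϖ]
  constructor
  · rintro ⟨n, w, hn, hh⟩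
    simpa only [hh] using existsUnique_extension_eq_pow_toNat_mul_unit hΛ hϖ n w hn
  · rintro ⟨⟨ν, ω⟩, ⟨hν_pos, hh⟩, -⟩
    obtain ⟨n, hn⟩ := exists_addMonoidHom_nat_coe_eq_of_nonneg (ν.comp Λ.subtype)
      (nonneg_of_forall_ne_zero_pos hν_pos)
    refine ⟨n, ω.comp (AddMonoidHom.toMultiplicative Λ.subtype), fun u hu => ?_, fun u => ?_⟩
    · exact Int.natCast_pos.mp (hn u ▸ hν_pos u u.2 (Subtype.coe_ne_coe.mpr hu))
    · rw [hh]
      exact ((unit_mul_pow_eq_pow_toNat_mul_unit_iff hϖ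
        (nonneg_of_forall_ne_zero_pos hν_pos u)).mpr ⟨(hn u).symm, rfl⟩).symm

end DiscreteValuationRing

theorem addVal_powerSeries_eq_order {k : Type*} [Field k] (f : PowerSeries k) :
    addVal (PowerSeries k) f = f.order := by
  refine ENat.eq_of_forall_natCast_le_iff fun n => ?_
  have hX : Irreducible (PowerSeries.X : PowerSeries k) := PowerSeries.X_irreducible
  rw [PowerSeries.order_eq_emultiplicity_X, ← pow_dvd_iff_le_emultiplicity, ← addVal_le_iff_dvd,
    hX.addVal_pow]

/-- Arcs on a toric variety with generic point in the torus: a monoid homomorphism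
`h : (Λ,+) → (k[[t]],·)` with nonzero values and positive `t`-order on `Λ \ {0}`
corresponds bijectively to a pair `(ν, ω)` where `ν : M → ℤ` is a group homomorphism
positive on `Λ \ {0}` and `ω : M → (k[[t]])ˣ` is a group homomorphism, via
`h(u) = t^{ν(u)} ω(u)`. -/
theorem stmt3 (M : Type*) [AddCommGroup M] [Module.Free ℤ M] [Module.Finite ℤ M]
    (Λ : AddSubmonoid M) (hΛ : AddSubgroup.closure (Λ : Set M) = ⊤)
    (k : Type*) [Field k] [CharZero k]
    (h : Λ → PowerSeries k) :
    ((∀ u v : Λ, h (u + v) = h u * h v) ∧ h 0 = 1 ∧ (∀ u : Λ, h u ≠ 0) ∧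
        (∀ u : Λ, (u : M) ≠ 0 → 0 < (h u).order)) ↔
      ∃! p : (M →+ ℤ) × (Multiplicative M →* (PowerSeries k)ˣ),
        (∀ u : M, u ∈ Λ → u ≠ 0 → 0 < p.1 u) ∧
        ∀ u : Λ, h u = (PowerSeries.X : PowerSeries k) ^ (p.1 (u : M)).toNat *
          ((p.2 (Multiplicative.ofAdd (u : M)) : (PowerSeries k)ˣ) : PowerSeries k) := by
  simpa only [addVal_powerSeries_eq_order, ne_eq, ZeroMemClass.coe_eq_zero] using
    stmt3_general hΛ PowerSeries.X_irreducible h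
end

section
/- Fix j ∈ {1,…,n} and suppose ν, ν' ∈ ℝ^d satisfy ⟨ν,e_i⟩ > 0 and ⟨ν',e_i⟩ > 0 for all i, and for every r ∈ {1,…,j} an r-element subset S ⊆ {1,…,n} satisfies Σ_{i∈S}⟨ν,e_i⟩ = ord_{C_r}(ν) if and only if it satisfies Σ_{i∈S}⟨ν',e_i⟩ = ord_{C_r}(ν'). If (p'_1,…,p'_n) is a permutation of (1,…,n) with ⟨ν',e_{p'_1}⟩ ≤ ⟨ν',e_{p'_2}⟩ ≤ … ≤ ⟨ν',e_{p'_n}⟩, then ⟨ν,e_{p'_1}⟩ ≤ ⟨ν,e_{p'_2}⟩ ≤ … ≤ ⟨ν,e_{p'_j}⟩, and Σ_{r=1}^{j'} ⟨ν, e_{p'_r}⟩ = ord_{C_{j'}}(ν) for every j' ∈ {1,…,j}. -/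
/-!
A finite set has minimal weight among the sets of its size exactly when none of its elements
weighs more than an outside one. The first `r` elements of an ordering that sorts `ν'` therefore
have minimal weight for `ν'`, hence also for `ν` when `r ≤ j`. The criterion, read backwards for
`ν`, says that the `r`-th of them weighs no more than any later element.
-/

section FirstElements

variable {ι : Type*} {n : ℕ}

/-- The set of the first `r` elements `p 0, …, p (r - 1)` of the ordering `p` of `ι`, the candidate
for a set of minimal weight; it is all of `ι` when `n < r`. -/
def firstElements (p : Fin n ≃ ι) (r : ℕ) : Finset ι :=
  (Finset.univ.filter fun i : Fin n => (i : ℕ) < r).map p.toEmbedding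

lemma apply_mem_firstElements {p : Fin n ≃ ι} {r : ℕ} {i : Fin n} :
    p i ∈ firstElements p r ↔ (i : ℕ) < r := by
  simp [firstElements]

lemma card_firstElements (p : Fin n ≃ ι) (r : ℕ) : (firstElements p r).card = min n r := by
  rw [firstElements, Finset.card_map, Fin.card_filter_val_lt]

end FirstElements

section MinWeight

variable {ι M : Type*} [AddCommMonoid M] [PartialOrder M] {w : ι → M}

/-- A finite set whose `w`-weight is least among all sets of the same cardinality. This is the
intrinsic form of computing the support function `ordC`, for arbitrary weights. -/
def IsMinWeight (w : ι → M) (S : Finset ι) : Prop :=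
  ∀ T : Finset ι, T.card = S.card → ∑ i ∈ S, w i ≤ ∑ i ∈ T, w i

lemma sum_le_sum_of_card_eq_of_forall_le [IsOrderedAddMonoid M] {κ : Type*} {v : κ → M}
    {S : Finset ι} {T : Finset κ} (hcard : S.card = T.card) (h : ∀ a ∈ S, ∀ b ∈ T, w a ≤ v b) :
    ∑ i ∈ S, w i ≤ ∑ i ∈ T, v i := by
  let σ : S ≃ T := Finset.equivOfCardEq hcard
  calc ∑ i ∈ S, w i = ∑ i : S, w i := (Finset.sum_coe_sort S w).symm
    _ ≤ ∑ i : S, v (σ i) := Finset.sum_le_sum fun i _ => h i i.2 (σ i) (σ i).2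
    _ = ∑ i : T, v i := σ.sum_comp fun i : T => v i
    _ = ∑ i ∈ T, v i := Finset.sum_coe_sort T v

theorem isMinWeight_iff_forall_le [IsOrderedCancelAddMonoid M] {S : Finset ι} :
    IsMinWeight w S ↔ ∀ a ∈ S, ∀ b ∉ S, w a ≤ w b := by
  classical
  constructor
  · intro hS a ha b hb
    have hcard : (insert b (S.erase a)).card = S.card := by
      rw [Finset.card_insert_of_notMem (fun h => hb (Finset.mem_of_mem_erase h)),
        Finset.card_erase_add_one ha]
    have hout : S \ insert b (S.erase a) = {a} := by grind
    have hin : insert b (S.erase a) \ S = {b} := by grind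
    simpa only [hout, hin, Finset.sum_singleton] using
      Finset.sum_sdiff_le_sum_sdiff.2 (hS _ hcard)
  · intro h T hT
    refine Finset.sum_sdiff_le_sum_sdiff.1
      (sum_le_sum_of_card_eq_of_forall_le (Finset.card_sdiff_comm hT.symm) fun a ha b hb => ?_)
    exact h a (Finset.mem_sdiff.1 ha).1 b (Finset.mem_sdiff.1 hb).2

lemma isMinWeight_firstElements [IsOrderedCancelAddMonoid M] {n : ℕ} {p : Fin n ≃ ι}
    (hp : Monotone (w ∘ p)) (r : ℕ) : IsMinWeight w (firstElements p r) := by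
  simp only [isMinWeight_iff_forall_le, p.surjective.forall, apply_mem_firstElements, not_lt]
  exact fun a ha b hb => hp (Fin.le_def.2 (ha.le.trans hb))

end MinWeight

lemma ordC_le_sum {d n r : ℕ} {e : Fin n → Fin d → ℝ} {ν : Fin d → ℝ} {S : Finset (Fin n)}
    (hS : S.card = r) : ordC e r ν ≤ ∑ i ∈ S, ∑ k, ν k * e i k := by
  have hfin : {x : ℝ | ∃ T : Finset (Fin n), T.card = r ∧
      x = ∑ i ∈ T, ∑ k, ν k * e i k}.Finite :=
    (Set.finite_range fun T : Finset (Fin n) => ∑ i ∈ T, ∑ k, ν k * e i k).subset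
      fun _ ⟨T, _, hT⟩ => ⟨T, hT.symm⟩
  exact csInf_le hfin.bddBelow ⟨S, hS, rfl⟩

lemma sum_eq_ordC_iff_isMinWeight {d n r : ℕ} {e : Fin n → Fin d → ℝ} {ν : Fin d → ℝ}
    {S : Finset (Fin n)} (hS : S.card = r) :
    ∑ i ∈ S, ∑ k, ν k * e i k = ordC e r ν ↔ IsMinWeight (fun i => ∑ k, ν k * e i k) S := by
  constructor
  · intro h T hT
    exact h.trans_le (ordC_le_sum (hT.trans hS))
  · intro h
    refine le_antisymm (le_csInf ⟨_, S, hS, rfl⟩ ?_) (ordC_le_sum hS)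
    rintro _ ⟨T, hT, rfl⟩
    exact h T (hT.trans hS.symm)

lemma IsMinWeight.sum_filter_val_lt_eq_ordC {d n r : ℕ} {e : Fin n → Fin d → ℝ} {ν : Fin d → ℝ}
    {p : Equiv.Perm (Fin n)} (hr : r ≤ n)
    (h : IsMinWeight (fun i => ∑ k, ν k * e i k) (firstElements p r)) :
    ∑ i ∈ Finset.univ.filter (fun i : Fin n => (i : ℕ) < r), ∑ k, ν k * e (p i) k =
      ordC e r ν := by
  have hcard : (firstElements p r).card = r := (card_firstElements p r).trans (min_eq_right hr)
  simpa only [firstElements, Finset.sum_map, Equiv.coe_toEmbedding] using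
    (sum_eq_ordC_iff_isMinWeight hcard).2 h

theorem stmt6_general {ι M M' : Type*} [AddCommMonoid M] [PartialOrder M]
    [IsOrderedCancelAddMonoid M] [AddCommMonoid M'] [PartialOrder M'] [IsOrderedCancelAddMonoid M']
    {n j : ℕ} {w : ι → M} {w' : ι → M'}
    (h : ∀ S : Finset ι, S.Nonempty → S.card ≤ j → IsMinWeight w' S → IsMinWeight w S)
    (p : Fin n ≃ ι) (hp : Monotone (w' ∘ p)) :
    (∀ a b : Fin n, a ≤ b → (a : ℕ) < j → w (p a) ≤ w (p b)) ∧
    ∀ r ≤ j, IsMinWeight w (firstElements p r) := by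
  have hmin : ∀ r ≤ j, IsMinWeight w (firstElements p r) := by
    intro r hr
    obtain hempty | hne := (firstElements p r).eq_empty_or_nonempty
    · simp [hempty, isMinWeight_iff_forall_le]
    · exact h _ hne ((card_firstElements p r).trans_le ((min_le_right n r).trans hr))
        (isMinWeight_firstElements hp r)
  refine ⟨fun a b hab ha => ?_, hmin⟩
  obtain rfl | hlt := hab.eq_or_lt
  · rfl
  · exact isMinWeight_iff_forall_le.1 (hmin (a + 1) ha)
      (p a) (apply_mem_firstElements.2 (Nat.lt_succ_self a))
      (p b) (apply_mem_firstElements.not.2 (not_lt.2 (Nat.succ_le_of_lt hlt)))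

theorem stmt6 (d n : ℕ) (e : Fin n → Fin d → ℝ)
    (j : ℕ) (hj1 : 1 ≤ j) (hjn : j ≤ n)
    (ν ν' : Fin d → ℝ)
    (ha : ∀ i, 0 < ∑ k, ν k * e i k) (ha' : ∀ i, 0 < ∑ k, ν' k * e i k)
    (hb : ∀ r : ℕ, 1 ≤ r → r ≤ j → ∀ S : Finset (Fin n), S.card = r →
      ((∑ i ∈ S, ∑ k, ν k * e i k) = ordC e r ν ↔
        (∑ i ∈ S, ∑ k, ν' k * e i k) = ordC e r ν'))
    (p' : Equiv.Perm (Fin n))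
    (hp' : ∀ a b : Fin n, a ≤ b → ∑ k, ν' k * e (p' a) k ≤ ∑ k, ν' k * e (p' b) k) :
    (∀ a b : Fin n, a ≤ b → (b : ℕ) < j →
      ∑ k, ν k * e (p' a) k ≤ ∑ k, ν k * e (p' b) k) ∧
    (∀ j' : ℕ, 1 ≤ j' → j' ≤ j →
      (∑ r ∈ Finset.univ.filter (fun r : Fin n => (r : ℕ) < j'), ∑ k, ν k * e (p' r) k) =
        ordC e j' ν) := by
  have h := stmt6_general (w := fun i => ∑ k, ν k * e i k) (w' := fun i => ∑ k, ν' k * e i k)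
    (fun S hS hSj => by simpa only [sum_eq_ordC_iff_isMinWeight rfl]
      using (hb _ hS.card_pos hSj S rfl).2) p' hp'
  exact ⟨fun a b hab hbj => h.1 a b hab ((Fin.le_def.1 hab).trans_lt hbj),
    fun r _ hr => (h.2 r hr).sum_filter_val_lt_eq_ordC (hr.trans hjn)⟩
end

section
/- Fix j ∈ {1,…,n} and suppose (ν,s) ∈ ℝ^d × ℝ satisfies ⟨ν,e_i⟩ > 0 for all i, φ_j(ν) ≤ s, and s < φ_{j+1}(ν) in case j < n. Suppose ν' ∈ ℝ^d satisfies ⟨ν',e_i⟩ > 0 for all i, the ℝ-span of {e_i : ⟨ν',e_i⟩ ≤ s} equals the ℝ-span ℓ of {e_i : ⟨ν,e_i⟩ ≤ s}, and ⟨ν,x⟩ = ⟨ν',x⟩ for every x ∈ ℓ. Then: (1) for every r ∈ {1,…,j}, an r-element subset S ⊆ {1,…,n} satisfies Σ_{i∈S}⟨ν',e_i⟩ = ord_{C_r}(ν') if and only if it satisfies Σ_{i∈S}⟨ν,e_i⟩ = ord_{C_r}(ν) (ν' defines the same faces of the Newton polyhedra of C_1,…,C_j as ν); and (2) φ_j(ν')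 ≤ s, with s < φ_{j+1}(ν') in case j < n. (Hence each set A(φ,j,θ) is a union of equivalence classes of the relation (ν,s) ∼ (ν',s') ⇔ s = s', ℓ_ν^s = ℓ_{ν'}^s and ν, ν' agree on this span.) -/
/-- `φ_j := ord_{C_j} − ord_{C_{j−1}}` (with `ord_{C_0} = 0`). -/
noncomputable def phiC {d n : ℕ} (e : Fin n → Fin d → ℝ) (j : ℕ) (ν : Fin d → ℝ) : ℝ :=
  ordC e j ν - ordC e (j - 1) ν

/-!
Write `w i = ⟨ν, e i⟩` and `T = {i | w i ≤ s}`. Exchanging one index at a time shows that `φ_j` is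
the `j`-th smallest value of `w`, so `φ_j(ν) ≤ s < φ_{j+1}(ν)` says exactly that `T` has `j`
elements, and that a minimizing set with at most `j` elements lies inside `T`. Hence both the bounds
on `s` and the minimizing sets of size at most `j` are determined by the restriction of `w` to `T`.
The assumptions on the spans give `ν` and `ν'` the same `T`, with the same values on it.
-/

section Sublevel

variable {ι M : Type*} [Fintype ι] [LinearOrder M] {w w' : ι → M} {s : M}

/-- The indices at which `w` takes a value at most `s`; for `w i = ⟨ν, e i⟩` these are the `i` whose
`e i` span `ℓ`. -/
def sublevel (w : ι → M) (s : M) : Finset ι :=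
  {i | w i ≤ s}

theorem mem_sublevel {i : ι} : i ∈ sublevel w s ↔ w i ≤ s := by
  simp [sublevel]

theorem sublevel_congr (h : ∀ i, w i ≤ s ∨ w' i ≤ s → w i = w' i) :
    sublevel w s = sublevel w' s := by
  ext i
  rw [mem_sublevel, mem_sublevel]
  exact ⟨fun hi => h i (.inl hi) ▸ hi, fun hi => (h i (.inr hi)).symm ▸ hi⟩

end Sublevel

section MinSum

open Finset

variable {ι M : Type*}

theorem finite_setOf_sum_of_card [AddCommMonoid M] [Finite ι] (w : ι → M) (j : ℕ) :
    {x | ∃ S : Finset ι, #S = j ∧ x = ∑ i ∈ S, w i}.Finite :=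
  (Set.finite_range fun S : Finset ι => ∑ i ∈ S, w i).subset fun _ ⟨S, _, hx⟩ => ⟨S, hx.symm⟩

variable [ConditionallyCompleteLinearOrder M] [AddCommMonoid M] {w w' : ι → M} {s : M} {j : ℕ}
  {S : Finset ι}

/-- The least sum of `j` values of the family `w` at distinct indices: the support function
`ord_{C_j}` as a function of the values `w i = ⟨ν, e i⟩`. For `j > #ι` it is the junk value
`sInf ∅`. -/
noncomputable def minSum (w : ι → M) (j : ℕ) : M :=
  sInf {x | ∃ S : Finset ι, #S = j ∧ x = ∑ i ∈ S, w i}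

theorem minSum_le_sum [Finite ι] (w : ι → M) (S : Finset ι) : minSum w #S ≤ ∑ i ∈ S, w i :=
  csInf_le (finite_setOf_sum_of_card w #S).bddBelow ⟨S, rfl, rfl⟩

theorem minSum_card_succ_le [Finite ι] {i : ι} (hi : i ∉ S) :
    minSum w (#S + 1) ≤ w i + ∑ k ∈ S, w k := by
  simpa only [card_cons, sum_cons] using minSum_le_sum w (S.cons i hi)

variable [Fintype ι]

theorem exists_sum_eq_minSum (w : ι → M) (hj : j ≤ Fintype.card ι) :
    ∃ S : Finset ι, #S = j ∧ ∑ i ∈ S, w i = minSum w j := by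
  obtain ⟨S₀, -, hS₀⟩ := exists_subset_card_eq (s := (univ : Finset ι)) hj
  have hne : {x | ∃ S : Finset ι, #S = j ∧ x = ∑ i ∈ S, w i}.Nonempty := ⟨_, S₀, hS₀, rfl⟩
  obtain ⟨S, hS, hsum⟩ := hne.csInf_mem (finite_setOf_sum_of_card w j)
  exact ⟨S, hS, hsum.symm⟩

variable [IsOrderedCancelAddMonoid M]

theorem subset_sublevel_of_sum_eq_minSum (hcard : #S ≤ #(sublevel w s))
    (hS : ∑ i ∈ S, w i = minSum w #S) : S ⊆ sublevel w s := by
  classical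
  intro i hiS
  by_contra hi
  obtain ⟨t, ht, htS⟩ :=
    exists_mem_notMem_of_card_lt_card ((card_erase_lt_of_mem hiS).trans_le hcard)
  have hti : w t < w i := (mem_sublevel.1 ht).trans_lt (not_le.1 (mt mem_sublevel.2 hi))
  refine lt_irrefl (minSum w #S) ?_
  calc minSum w #S = minSum w (#(S.erase i) + 1) := by rw [card_erase_add_one hiS]
    _ ≤ w t + ∑ k ∈ S.erase i, w k := minSum_card_succ_le htS
    _ < w i + ∑ k ∈ S.erase i, w k := by gcongr
    _ = minSum w #S := by rw [add_sum_erase S w hiS, hS]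

theorem sum_eq_minSum_iff_of_card_le (hcard : #S ≤ #(sublevel w s)) :
    ∑ i ∈ S, w i = minSum w #S ↔
      S ⊆ sublevel w s ∧ ∀ T ⊆ sublevel w s, #T = #S → ∑ i ∈ S, w i ≤ ∑ i ∈ T, w i := by
  refine ⟨fun hS => ⟨subset_sublevel_of_sum_eq_minSum hcard hS, fun T _ hT => ?_⟩,
    fun ⟨_, hmin⟩ => ?_⟩
  · rw [hS, ← hT]
    exact minSum_le_sum w T
  · obtain ⟨T, hT, hsum⟩ := exists_sum_eq_minSum w (card_le_univ S)
    have hTsub : T ⊆ sublevel w s :=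
      subset_sublevel_of_sum_eq_minSum (hT.trans_le hcard) (hT ▸ hsum)
    exact le_antisymm ((hmin T hTsub hT).trans_eq hsum) (minSum_le_sum w S)

theorem sum_eq_minSum_congr (h : ∀ i, w i ≤ s ∨ w' i ≤ s → w i = w' i)
    (hcard : #S ≤ #(sublevel w s)) :
    ∑ i ∈ S, w i = minSum w #S ↔ ∑ i ∈ S, w' i = minSum w' #S := by
  have hsub := sublevel_congr h
  have hsum {T : Finset ι} (hT : T ⊆ sublevel w s) : ∑ i ∈ T, w i = ∑ i ∈ T, w' i :=
    sum_congr rfl fun i hi => h i (.inl (mem_sublevel.1 (hT hi)))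
  rw [sum_eq_minSum_iff_of_card_le hcard, sum_eq_minSum_iff_of_card_le (hsub ▸ hcard), ← hsub]
  refine and_congr_right fun hS => forall₃_congr fun T hT _ => ?_
  rw [hsum hS, hsum hT]

end MinSum

section MinSumIncr

open Finset

variable {ι M : Type*} [ConditionallyCompleteLinearOrder M] [AddCommGroup M]
  {w : ι → M} {s : M} {j : ℕ}

/-- The increment `φ_j` of `minSum`, indexed from `1` as in the paper; at `j = 0` truncated
subtraction makes it `0`. -/
noncomputable def minSumIncr (w : ι → M) (j : ℕ) : M :=
  minSum w j - minSum w (j - 1)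

variable [Fintype ι] [IsOrderedAddMonoid M]

theorem minSumIncr_succ_le (h : j < #(sublevel w s)) : minSumIncr w (j + 1) ≤ s := by
  obtain ⟨S, rfl, hsum⟩ := exists_sum_eq_minSum w (h.le.trans (card_le_univ _))
  obtain ⟨i, hi, hiS⟩ := exists_mem_notMem_of_card_lt_card h
  rw [minSumIncr, Nat.add_sub_cancel, sub_le_iff_le_add]
  calc minSum w (#S + 1) ≤ w i + ∑ k ∈ S, w k := minSum_card_succ_le hiS
    _ ≤ s + minSum w #S := add_le_add (mem_sublevel.1 hi) hsum.le

theorem lt_minSumIncr_succ (hj : j < Fintype.card ι) (h : #(sublevel w s) ≤ j) :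
    s < minSumIncr w (j + 1) := by
  classical
  obtain ⟨S, hS, hsum⟩ := exists_sum_eq_minSum w (Nat.succ_le_of_lt hj)
  obtain ⟨i, hiS, hi⟩ := exists_mem_notMem_of_card_lt_card (show #(sublevel w s) < #S by omega)
  have hcard : #(S.erase i) = j := by rw [card_erase_of_mem hiS, hS, Nat.succ_sub_one]
  rw [mem_sublevel, not_le] at hi
  rw [minSumIncr, Nat.add_sub_cancel, lt_sub_iff_add_lt]
  calc s + minSum w j < w i + ∑ k ∈ S.erase i, w k :=
        add_lt_add_of_lt_of_le hi (hcard ▸ minSum_le_sum w (S.erase i))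
    _ = minSum w (j + 1) := by rw [add_sum_erase S w hiS, hsum]

theorem minSumIncr_succ_le_iff (hj : j < Fintype.card ι) :
    minSumIncr w (j + 1) ≤ s ↔ j < #(sublevel w s) :=
  ⟨fun h => not_le.1 fun hle => (lt_minSumIncr_succ hj hle).not_ge h, minSumIncr_succ_le⟩

theorem card_sublevel_eq_iff (hj : 1 ≤ j) (hjn : j ≤ Fintype.card ι) :
    #(sublevel w s) = j ↔
      minSumIncr w j ≤ s ∧ (j < Fintype.card ι → s < minSumIncr w (j + 1)) := by
  obtain ⟨k, rfl⟩ := Nat.exists_eq_add_of_le' hj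
  have hupper : (k + 1 < Fintype.card ι → s < minSumIncr w (k + 1 + 1)) ↔
      #(sublevel w s) ≤ k + 1 := by
    refine ⟨fun h => ?_, fun h hk => lt_minSumIncr_succ hk h⟩
    rcases hjn.lt_or_eq with hk | hk
    · exact not_lt.1 fun hlt => (h hk).not_ge ((minSumIncr_succ_le_iff hk).2 hlt)
    · exact (card_le_univ _).trans_eq hk.symm
  rw [minSumIncr_succ_le_iff hjn, hupper]
  omega

theorem stmt8_general {R E : Type*} [Semiring R] [AddCommMonoid E] [Module R E] [Module R M]
    (e : ι → E) (hj : 1 ≤ j) (hjn : j ≤ Fintype.card ι) (ν ν' : E →ₗ[R] M)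
    (hlow : minSumIncr (fun i => ν (e i)) j ≤ s)
    (hupp : j < Fintype.card ι → s < minSumIncr (fun i => ν (e i)) (j + 1))
    (hspan : Submodule.span R {x | ∃ i, ν' (e i) ≤ s ∧ x = e i} =
      Submodule.span R {x | ∃ i, ν (e i) ≤ s ∧ x = e i})
    (hagree : ∀ x ∈ Submodule.span R {x | ∃ i, ν (e i) ≤ s ∧ x = e i}, ν x = ν' x) :
    (∀ S : Finset ι, #S ≤ j →
      (∑ i ∈ S, ν' (e i) = minSum (fun i => ν' (e i)) #S ↔
        ∑ i ∈ S, ν (e i) = minSum (fun i => ν (e i)) #S)) ∧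
    minSumIncr (fun i => ν' (e i)) j ≤ s ∧
      (j < Fintype.card ι → s < minSumIncr (fun i => ν' (e i)) (j + 1)) := by
  have heq : ∀ i, ν (e i) ≤ s ∨ ν' (e i) ≤ s → ν (e i) = ν' (e i) := by
    rintro i (hi | hi)
    · exact hagree _ (Submodule.subset_span ⟨i, hi, rfl⟩)
    · exact hagree _ (hspan ▸ Submodule.subset_span ⟨i, hi, rfl⟩)
  have hcard : #(sublevel (fun i => ν (e i)) s) = j := (card_sublevel_eq_iff hj hjn).2 ⟨hlow, hupp⟩
  refine ⟨fun S hS => (sum_eq_minSum_congr heq (hS.trans_eq hcard.symm)).symm, ?_⟩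
  rwa [← card_sublevel_eq_iff hj hjn, ← sublevel_congr heq]

end MinSumIncr

theorem stmt8 (d n : ℕ) (e : Fin n → Fin d → ℝ)
    (j : ℕ) (hj1 : 1 ≤ j) (hjn : j ≤ n)
    (ν ν' : Fin d → ℝ) (s : ℝ)
    (ha : ∀ i, 0 < ∑ k, ν k * e i k)
    (hs1 : phiC e j ν ≤ s) (hs2 : j < n → s < phiC e (j + 1) ν)
    (ha' : ∀ i, 0 < ∑ k, ν' k * e i k)
    (hspan : Submodule.span ℝ {x : Fin d → ℝ | ∃ i, (∑ k, ν' k * e i k) ≤ s ∧ x = e i} =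
      Submodule.span ℝ {x : Fin d → ℝ | ∃ i, (∑ k, ν k * e i k) ≤ s ∧ x = e i})
    (hagree : ∀ x ∈ Submodule.span ℝ {x : Fin d → ℝ | ∃ i, (∑ k, ν k * e i k) ≤ s ∧ x = e i},
      ∑ k, ν k * x k = ∑ k, ν' k * x k) :
    (∀ r : ℕ, 1 ≤ r → r ≤ j → ∀ S : Finset (Fin n), S.card = r →
      ((∑ i ∈ S, ∑ k, ν' k * e i k) = ordC e r ν' ↔
        (∑ i ∈ S, ∑ k, ν k * e i k) = ordC e r ν)) ∧
    phiC e j ν' ≤ s ∧ (j < n → s < phiC e (j + 1) ν') := by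
  -- `dotProductEquiv ℝ (Fin d) ν x` unfolds to `∑ k, ν k * x k`, which turns `ordC` and `phiC` into
  -- `minSum` and `minSumIncr` by definition.
  obtain ⟨hfaces, hφ⟩ := stmt8_general e hj1 (hjn.trans_eq (Fintype.card_fin n).symm)
    (dotProductEquiv ℝ (Fin d) ν) (dotProductEquiv ℝ (Fin d) ν') hs1
    (fun h => hs2 (h.trans_eq (Fintype.card_fin n))) hspan hagree
  exact ⟨by rintro _ - hr S rfl; exact hfaces S hr, by rwa [Fintype.card_fin] at hφ⟩
end
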